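/- arXiv:2406.04872 — 2 statements merged into one kernel-verified Lean document; each statement's English description precedes it below -/
import Mathlib

section
/- For every subset S of B and every orthonormal basis E of the subspace W_S, one has sqrt(|E| * Σ_{e∈E} ⟨e, v⟩²) = r(S); in particular the left-hand side does not depend on the choice of the orthonormal basis E of W_S. -/
/-!
Statement 0 (Proposition 3.1): for every subset `S` of the finite batch `B` and every
orthonormal basis `E` of the subspace `W_S = span {g d : d ∈ S}`, one has
`sqrt (|E| * Σ_{e ∈ E} ⟪e, v⟫²) = r S`, where `v = Σ_{d ∈ B} g d` and
`r S` is the supremum of `Σ_{e ∈ E} ⟪e, v⟫` over all orthonormal bases `E` of `W_S`.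
-/

open scoped RealInnerProductSpace

noncomputable section

variable {V ι : Type*} [NormedAddCommGroup V] [InnerProductSpace ℝ V]

/-- The subspace spanned by the features of the elements of `S`. -/
def featSpan (g : ι → V) (S : Finset ι) : Submodule ℝ V :=
  Submodule.span ℝ (g '' (S : Set ι))

/-- `E` is a finite orthonormal family of vectors of `V` whose span equals `W`. -/
def IsONBasisOf (E : Finset V) (W : Submodule ℝ V) : Prop :=
  (Orthonormal ℝ (fun e : E => (e : V))) ∧ Submodule.span ℝ (E : Set V) = W

/-- The orthogonalized representativeness
`r(S) = sup { Σ_{e ∈ E} ⟪e, v⟫ : E an orthonormal basis of W_S }`,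
where `v = Σ_{d ∈ B} g d`. -/
def r (g : ι → V) (B S : Finset ι) : ℝ :=
  sSup {x : ℝ | ∃ E : Finset V, IsONBasisOf E (featSpan g S) ∧
    x = ∑ e ∈ E, ⟪e, ∑ d ∈ B, g d⟫}

/-!
Write `W = W_S` and let `P` be the orthogonal projection onto `W`. Every `x ∈ W` satisfies
`⟪x, v⟫ = ⟪x, P v⟫`, and the squared coefficients `⟪e, v⟫ ^ 2` along an orthonormal basis of `W`
add up to `‖P v‖ ^ 2`. The vectors `∑ e ∈ E, e`, for `E` an orthonormal basis of `W`, fill the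
whole sphere of radius `√(dim W)` in `W`: a reflection of `W` carries any point of that sphere to
any other one, and it carries orthonormal bases to orthonormal bases. So `r S` is the maximum of
`⟪·, v⟫` on a sphere, which by Cauchy–Schwarz is `√(dim W) * ‖P v‖`.
-/

section RCLike

variable {𝕜 H κ : Type*} [RCLike 𝕜] [NormedAddCommGroup H] [InnerProductSpace 𝕜 H]

theorem norm_sum_of_orthonormal {b : κ → H} (hb : Orthonormal 𝕜 b) (s : Finset κ) :
    ‖∑ i ∈ s, b i‖ = √(s.card : ℝ) := by
  have h := hb.inner_sum (fun _ => 1) (fun _ => 1) s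
  simp only [one_smul, map_one, mul_one, Finset.sum_const, nsmul_eq_mul] at h
  rw [norm_eq_sqrt_re_inner (𝕜 := 𝕜), h, RCLike.natCast_re]

theorem sum_sq_norm_inner_eq_norm_starProjection_sq [Fintype κ] {b : κ → H} (hb : Orthonormal 𝕜 b)
    {W : Submodule 𝕜 H} [W.HasOrthogonalProjection] (hW : Submodule.span 𝕜 (Set.range b) = W)
    (v : H) : ∑ i, ‖inner 𝕜 (b i) v‖ ^ 2 = ‖W.starProjection v‖ ^ 2 := by
  subst hW
  let c := Module.Basis.span hb.linearIndependent
  have hcb (i : κ) : (c i : H) = b i :=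
    congrArg Subtype.val (Module.Basis.span_apply hb.linearIndependent i)
  have hc : Orthonormal 𝕜 c := by
    rwa [← (Submodule.subtypeₗᵢ _).orthonormal_comp_iff,
      show Submodule.subtypeₗᵢ _ ∘ c = b from funext hcb]
  rw [Submodule.starProjection_apply, ← Submodule.coe_norm,
    ← (c.toOrthonormalBasis hc).sum_sq_norm_inner_right]
  simp only [Module.Basis.coe_toOrthonormalBasis,
    Submodule.inner_orthogonalProjectionOnto_eq_of_mem_left, hcb]

theorem inner_starProjection_right_of_mem {W : Submodule 𝕜 H} [W.HasOrthogonalProjection] {x : H}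
    (hx : x ∈ W) (v : H) : inner 𝕜 x (W.starProjection v) = inner 𝕜 x v := by
  rw [← W.inner_starProjection_left_eq_right, W.starProjection_eq_self_iff.2 hx]

theorem map_reflection_orthogonal_of_le {K W : Submodule 𝕜 H} [K.HasOrthogonalProjection]
    (hKW : K ≤ W) : W.map (Kᗮ.reflection.toLinearEquiv : H →ₗ[𝕜] H) = W := by
  have hmem : ∀ x ∈ W, Kᗮ.reflection x ∈ W := fun x hx => by
    rw [Submodule.reflection_orthogonal_apply, Submodule.reflection_apply]
    exact W.neg_mem (W.sub_mem (nsmul_mem (hKW (K.starProjection_apply_mem x)) 2) hx)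
  exact le_antisymm (Submodule.map_le_iff_le_comap.2 hmem) fun x hx =>
    ⟨_, hmem x hx, Submodule.reflection_reflection _ x⟩

end RCLike

theorem isGreatest_inner_image_inter_sphere {W : Submodule ℝ V} [W.HasOrthogonalProjection] {R : ℝ}
    (hne : ((W : Set V) ∩ Metric.sphere 0 R).Nonempty) (v : V) :
    IsGreatest ((⟪·, v⟫) '' ((W : Set V) ∩ Metric.sphere 0 R)) (R * ‖W.starProjection v‖) := by
  obtain ⟨a, haW, haR⟩ := hne
  have hR : 0 ≤ R := Metric.nonneg_of_mem_sphere haR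
  set p := W.starProjection v
  have hpW : p ∈ W := W.starProjection_apply_mem v
  have hinner {x : V} (hx : x ∈ W) : ⟪x, v⟫ = ⟪x, p⟫ :=
    (inner_starProjection_right_of_mem hx v).symm
  refine ⟨?attained, ?upper_bound⟩
  case attained =>
    rcases eq_or_ne p 0 with hp | hp
    · exact ⟨a, ⟨haW, haR⟩, by simp [hinner haW, hp]⟩
    · have hp' : ‖p‖ ≠ 0 := norm_ne_zero_iff.2 hp
      have hxW : (R / ‖p‖) • p ∈ W := W.smul_mem _ hpW
      refine ⟨(R / ‖p‖) • p, ⟨hxW, ?_⟩, ?_⟩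
      · rw [mem_sphere_zero_iff_norm, norm_smul, Real.norm_of_nonneg (by positivity),
          div_mul_cancel₀ _ hp']
      · calc ⟪(R / ‖p‖) • p, v⟫ = R / ‖p‖ * ‖p‖ ^ 2 := by
              rw [hinner hxW, real_inner_smul_left, real_inner_self_eq_norm_sq]
          _ = R * ‖p‖ := by field_simp
  case upper_bound =>
    rintro _ ⟨x, ⟨hxW, hxR⟩, rfl⟩
    calc ⟪x, v⟫ = ⟪x, p⟫ := hinner hxW
      _ ≤ ‖x‖ * ‖p‖ := real_inner_le_norm x p
      _ = R * ‖p‖ := by rw [mem_sphere_zero_iff_norm.1 hxR]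

namespace IsONBasisOf

variable {E F : Finset V} {W : Submodule ℝ V}

theorem mem (hE : IsONBasisOf E W) {e : V} (he : e ∈ E) : e ∈ W :=
  hE.2 ▸ Submodule.subset_span he

theorem finiteDimensional (hE : IsONBasisOf E W) : FiniteDimensional ℝ W :=
  hE.2 ▸ FiniteDimensional.span_finset ℝ E

theorem card_eq (hE : IsONBasisOf E W) (hF : IsONBasisOf F W) : E.card = F.card := by
  rw [← finrank_span_finset_eq_card hE.1.linearIndependent,
    ← finrank_span_finset_eq_card hF.1.linearIndependent, hE.2, hF.2]

theorem norm_sum (hE : IsONBasisOf E W) : ‖∑ e ∈ E, e‖ = √(E.card : ℝ) := by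
  rw [← Finset.sum_coe_sort, norm_sum_of_orthonormal hE.1, Finset.card_univ, Fintype.card_coe]

theorem sum_sq_inner (hE : IsONBasisOf E W) [W.HasOrthogonalProjection] (v : V) :
    ∑ e ∈ E, ⟪e, v⟫ ^ 2 = ‖W.starProjection v‖ ^ 2 := by
  have hspan : Submodule.span ℝ (Set.range fun e : E => (e : V)) = W := by
    rw [← hE.2]
    simp
  rw [← sum_sq_norm_inner_eq_norm_starProjection_sq hE.1 hspan,
    ← Finset.sum_coe_sort E fun e => ⟪e, v⟫ ^ 2]
  simp only [Real.norm_eq_abs, sq_abs]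

theorem map (hE : IsONBasisOf E W) {V' : Type*} [NormedAddCommGroup V'] [InnerProductSpace ℝ V']
    (f : V →ₗᵢ[ℝ] V') :
    IsONBasisOf (E.map ⟨f, f.injective⟩) (W.map f.toLinearMap) := by
  constructor
  · have h := (hE.1.comp_linearIsometry f).toSubtypeRange
    have hrange : Set.range (f ∘ fun e : E => (e : V)) = (E.map ⟨f, f.injective⟩ : Finset V') := by
      simp [Set.range_comp]
    rwa [hrange] at h
  · rw [← hE.2, Submodule.map_span, Finset.coe_map]
    rfl

theorem image_sum_eq_inter_sphere (hE : IsONBasisOf E W) :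
    (fun F => ∑ e ∈ F, e) '' {F : Finset V | IsONBasisOf F W} =
      (W : Set V) ∩ Metric.sphere 0 √(E.card : ℝ) := by
  have hsum {F : Finset V} (hF : IsONBasisOf F W) : ∑ e ∈ F, e ∈ W :=
    Submodule.sum_mem _ fun _ => hF.mem
  refine Set.Subset.antisymm ?_ fun a ⟨haW, haE⟩ => ?_
  · rintro _ ⟨F, hF, rfl⟩
    exact ⟨hsum hF, by rw [mem_sphere_zero_iff_norm, hF.norm_sum, hE.card_eq hF]⟩
  · rw [mem_sphere_zero_iff_norm] at haE
    set ρ := (ℝ ∙ ((∑ e ∈ E, e) - a))ᗮ.reflection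
    have hρW : W.map (ρ.toLinearEquiv : V →ₗ[ℝ] V) = W := map_reflection_orthogonal_of_le <|
      (Submodule.span_singleton_le_iff_mem _ _).2 (W.sub_mem (hsum hE) haW)
    refine ⟨E.map ⟨ρ, ρ.injective⟩, hρW ▸ hE.map ρ.toLinearIsometry, ?_⟩
    calc ∑ e ∈ E.map ⟨ρ, ρ.injective⟩, e = ρ (∑ e ∈ E, e) := by simp [map_sum]
      _ = a := Submodule.reflection_sub (hE.norm_sum.trans haE.symm)

end IsONBasisOf

theorem sqrt_card_mul_sum_inner_sq_eq_r_general {E : Finset V} {W : Submodule ℝ V}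
    (hE : IsONBasisOf E W) (v : V) :
    IsGreatest {x : ℝ | ∃ F : Finset V, IsONBasisOf F W ∧ x = ∑ e ∈ F, ⟪e, v⟫}
      √((E.card : ℝ) * ∑ e ∈ E, ⟪e, v⟫ ^ 2) := by
  have := hE.finiteDimensional
  have hset : {x : ℝ | ∃ F : Finset V, IsONBasisOf F W ∧ x = ∑ e ∈ F, ⟪e, v⟫} =
      (⟪·, v⟫) '' ((W : Set V) ∩ Metric.sphere 0 √(E.card : ℝ)) := by
    rw [← hE.image_sum_eq_inter_sphere, Set.image_image]
    simp only [sum_inner, Set.image, Set.mem_ofPred_eq, eq_comm]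
  rw [hset, hE.sum_sq_inner, Real.sqrt_mul (Nat.cast_nonneg _), Real.sqrt_sq (norm_nonneg _)]
  refine isGreatest_inner_image_inter_sphere ?_ v
  rw [← hE.image_sum_eq_inter_sphere]
  exact ⟨_, E, hE, rfl⟩

theorem sqrt_card_mul_sum_inner_sq_eq_r
    (g : ι → V) (B : Finset ι) (S : Finset ι) (hS : S ⊆ B)
    (E : Finset V) (hE : IsONBasisOf E (featSpan g S)) :
    Real.sqrt ((E.card : ℝ) * ∑ e ∈ E, ⟪e, ∑ d ∈ B, g d⟫ ^ 2) = r g B S :=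
  (sqrt_card_mul_sum_inner_sq_eq_r_general hE _).csSup_eq.symm

end
end

section
/- Let ι be a finite type and F : Finset ι → ℝ be normalized (F(∅) = 0), monotone (A ⊆ C implies F(A) ≤ F(C)), and submodular (for all S and all j, k ∉ S, F(S ∪ {k}) − F(S) ≥ F(S ∪ {j, k}) − F(S ∪ {j})). Let N be a natural number and let S₀ = ∅, S₁, …, S_N be a greedy chain: for each t < N there is x_t ∉ S_t with S_{t+1} = S_t ∪ {x_t} and F(S_t ∪ {x_t}) ≥ F(S_t ∪ {y}) for every y ∉ S_t. Then for every T ⊆ ι with |T| = N, F(S_N) ≥ (1 − e^{−1}) · F(T), where e is Euler's number. -/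
/-!
By submodularity, adding all of `T` to the current set gains at most the sum of the gains of the
single elements of `T`, hence at most `k` times the greedy gain when `T` has at most `k` elements.
So every greedy step closes at least the fraction `1 / k` of the gap to `F T`, and `N` steps leave
at most the fraction `(1 - 1 / k) ^ N ≤ exp (-N / k)` of the initial gap.
-/

section Submodular

variable {ι G : Type*} [DecidableEq ι] [AddCommGroup G]

/-- Submodularity of a set function in the form of decreasing marginal gains: the gain of `k` does
not increase when another element `j` joins the base set. The elements are required to be distinct,
since for `j = k` the inequality says that `F` is monotone. -/
def IsSubmodular [LE G] (F : Finset ι → G) : Prop :=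
  ∀ ⦃S : Finset ι⦄ ⦃j k : ι⦄, j ∉ S → k ∉ insert j S →
    F (insert k (insert j S)) - F (insert j S) ≤ F (insert k S) - F S

theorem IsSubmodular.marginal_union_le [Preorder G] {F : Finset ι → G} (hF : IsSubmodular F)
    (A U : Finset ι) {k : ι} (hk : k ∉ A ∪ U) :
    F (insert k (A ∪ U)) - F (A ∪ U) ≤ F (insert k A) - F A := by
  induction U using Finset.induction_on with
  | empty => rw [Finset.union_empty]
  | insert j U _ ih =>
    rw [Finset.union_insert] at hk ⊢
    have hkU : k ∉ A ∪ U := fun h => hk (Finset.mem_insert_of_mem h)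
    by_cases hj : j ∈ A ∪ U
    · rw [Finset.insert_eq_self.2 hj]
      exact ih hkU
    · exact (hF hj hk).trans (ih hkU)

theorem IsSubmodular.union_sub_le_sum_marginal [Preorder G] [IsOrderedAddMonoid G]
    {F : Finset ι → G} (hF : IsSubmodular F) (A T : Finset ι) :
    F (A ∪ T) - F A ≤ ∑ y ∈ T, (F (insert y A) - F A) := by
  induction T using Finset.induction_on with
  | empty => rw [Finset.union_empty, sub_self, Finset.sum_empty]
  | insert k T hkT ih =>
    rw [Finset.union_insert, Finset.sum_insert hkT]
    by_cases hkA : k ∈ A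
    · rwa [Finset.insert_eq_self.2 (Finset.mem_union_left T hkA), Finset.insert_eq_self.2 hkA,
        sub_self, zero_add]
    · have hk : k ∉ A ∪ T := Finset.notMem_union.2 ⟨hkA, hkT⟩
      calc F (insert k (A ∪ T)) - F A
          = (F (insert k (A ∪ T)) - F (A ∪ T)) + (F (A ∪ T) - F A) :=
            (sub_add_sub_cancel _ _ _).symm
        _ ≤ (F (insert k A) - F A) + ∑ y ∈ T, (F (insert y A) - F A) :=
            add_le_add (hF.marginal_union_le A T hk) ih

end Submodular

section GreedyStep

variable {ι α : Type*} [DecidableEq ι]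

/-- One step of greedy maximization of `F`: the set `B` arises from `A` by adding a new element
whose gain is largest among all elements outside `A`. -/
def IsGreedyStep [LE α] (F : Finset ι → α) (A B : Finset ι) : Prop :=
  ∃ x ∉ A, B = insert x A ∧ ∀ y ∉ A, F (insert y A) ≤ F (insert x A)

theorem IsGreedyStep.le [Preorder α] {F : Finset ι → α} {A B : Finset ι}
    (hAB : IsGreedyStep F A B) (hmono : Monotone F) : F A ≤ F B := by
  obtain ⟨x, -, rfl, -⟩ := hAB
  exact hmono (Finset.subset_insert x A)

theorem IsGreedyStep.insert_le [Preorder α] {F : Finset ι → α} {A B : Finset ι}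
    (hAB : IsGreedyStep F A B) (hmono : Monotone F) (y : ι) : F (insert y A) ≤ F B := by
  by_cases hy : y ∈ A
  · rw [Finset.insert_eq_self.2 hy]
    exact hAB.le hmono
  · obtain ⟨x, -, rfl, hbest⟩ := hAB
    exact hbest y hy

theorem IsGreedyStep.sub_le_card_nsmul [AddCommGroup α] [Preorder α] [IsOrderedAddMonoid α]
    {F : Finset ι → α} {A B : Finset ι} (hAB : IsGreedyStep F A B) (hmono : Monotone F)
    (hF : IsSubmodular F) (T : Finset ι) :
    F T - F A ≤ T.card • (F B - F A) :=
  calc F T - F A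
      ≤ F (A ∪ T) - F A := sub_le_sub_right (hmono Finset.subset_union_right) _
    _ ≤ ∑ y ∈ T, (F (insert y A) - F A) := hF.union_sub_le_sum_marginal A T
    _ ≤ T.card • (F B - F A) :=
        Finset.sum_le_card_nsmul _ _ _ fun y _ => sub_le_sub_right (hAB.insert_le hmono y) _

end GreedyStep

theorem IsGreedyStep.gap_le_mul_gap {ι K : Type*} [DecidableEq ι] [Field K] [LinearOrder K]
    [IsStrictOrderedRing K] {F : Finset ι → K} {A B : Finset ι} (hAB : IsGreedyStep F A B)
    (hmono : Monotone F) (hF : IsSubmodular F) {T : Finset ι} {k : ℕ} (hk : 0 < k)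
    (hT : T.card ≤ k) : F T - F B ≤ (1 - 1 / k) * (F T - F A) := by
  have hgain : (F T - F A) / k ≤ F B - F A := by
    rw [div_le_iff₀' (Nat.cast_pos.2 hk), ← nsmul_eq_mul]
    exact (hAB.sub_le_card_nsmul hmono hF T).trans
      (nsmul_le_nsmul_left (sub_nonneg.2 (hAB.le hmono)) hT)
  calc F T - F B ≤ (F T - F A) - (F T - F A) / k := by linarith
    _ = (1 - 1 / k) * (F T - F A) := by ring

theorem one_sub_pow_le_exp_neg_mul {x : ℝ} (hx : x ≤ 1) (n : ℕ) :
    (1 - x) ^ n ≤ Real.exp (-(n * x)) :=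
  calc (1 - x) ^ n ≤ Real.exp (-x) ^ n :=
        pow_le_pow_left₀ (sub_nonneg.2 hx) (Real.one_sub_le_exp_neg x) n
    _ = Real.exp (-(n * x)) := by rw [← Real.exp_nat_mul, mul_neg]

theorem greedy_submodular_guarantee_general {ι : Type*} [DecidableEq ι] {F : Finset ι → ℝ}
    (hmono : Monotone F) (hF : IsSubmodular F) {N : ℕ} {S : ℕ → Finset ι} (hS0 : S 0 = ∅)
    (hgreedy : ∀ t < N, IsGreedyStep F (S t) (S (t + 1))) {T : Finset ι} {k : ℕ} (hk : 0 < k)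
    (hT : T.card ≤ k) :
    (1 - Real.exp (-(N / k))) * (F T - F ∅) ≤ F (S N) - F ∅ := by
  have hk_inv : 1 / (k : ℝ) ≤ 1 := (div_le_one (Nat.cast_pos.2 hk)).2 (Nat.one_le_cast.2 hk)
  have hpow : (1 - 1 / (k : ℝ)) ^ N ≤ Real.exp (-(N / k)) := by
    simpa only [mul_one_div] using one_sub_pow_le_exp_neg_mul hk_inv N
  have hgap : F T - F (S N) ≤ Real.exp (-(N / k)) * (F T - F ∅) :=
    calc F T - F (S N) ≤ (1 - 1 / (k : ℝ)) ^ N * (F T - F (S 0)) :=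
          le_geom (u := fun t => F T - F (S t)) (sub_nonneg.2 hk_inv) N fun t ht =>
            (hgreedy t ht).gap_le_mul_gap hmono hF hk hT
      _ ≤ Real.exp (-(N / k)) * (F T - F ∅) := by
          rw [hS0]
          exact mul_le_mul_of_nonneg_right hpow (sub_nonneg.2 (hmono (Finset.empty_subset T)))
  linarith

/-!
Statement 13 (Lemma B.1, Nemhauser–Wolsey–Fisher guarantee): let `ι` be a finite type
and `F : Finset ι → ℝ` be normalized (`F ∅ = 0`), monotone, and submodular
(for all `S` and `j, k ∉ S`, `F (S ∪ {k}) − F S ≥ F (S ∪ {j, k}) − F (S ∪ {j})`).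
If `S 0 = ∅, S 1, …, S N` is a greedy chain, then for every `T` with `|T| = N`,
`F (S N) ≥ (1 − e⁻¹) * F T`.
-/

theorem greedy_submodular_guarantee {ι : Type*} [Fintype ι] [DecidableEq ι]
    (F : Finset ι → ℝ)
    (hnormalized : F ∅ = 0)
    (hmono : ∀ A C : Finset ι, A ⊆ C → F A ≤ F C)
    (hsubmodular : ∀ (S : Finset ι) (j k : ι), j ∉ S → k ∉ S →
      F (insert k S) - F S ≥ F (insert k (insert j S)) - F (insert j S))
    (N : ℕ) (S : ℕ → Finset ι)
    (hS0 : S 0 = ∅)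
    (hgreedy : ∀ t < N, ∃ x ∉ S t, S (t + 1) = insert x (S t) ∧
      ∀ y ∉ S t, F (insert y (S t)) ≤ F (insert x (S t)))
    (T : Finset ι) (hT : T.card = N) :
    F (S N) ≥ (1 - Real.exp (-1)) * F T := by
  have hF : IsSubmodular F := fun A j k hj hk =>
    hsubmodular A j k hj fun h => hk (Finset.mem_insert_of_mem h)
  obtain rfl | hN := Nat.eq_zero_or_pos N
  · rw [hS0, Finset.card_eq_zero.1 hT, hnormalized, mul_zero]
  · simpa only [hnormalized, sub_zero, div_self (Nat.cast_ne_zero (R := ℝ).2 hN.ne')] using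
      greedy_submodular_guarantee_general hmono hF hS0 hgreedy hN hT.le
end
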